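/- In the perturbed stationary densities setup, assume additionally that c · h ≤ 1/120. Then the two densities separate at the point x*: |π̃(x*) − π(x*)| = |c̃/(1 + 1/M)² − c| ≥ c/(2M). -/

import Mathlib

open MeasureTheory

/-!
The tangent line `1 - 2 * t` lies below `(1 + t)⁻¹ ^ 2`, so the perturbed mass `1 / c̃` is at least
`1 / c - (2 / M) * ∫ ψ w`, where `w` is the unnormalised density. If `ψ` has mean at most `1 / 4`
under `c * w`, this says `c̃ * (1 - 1 / (2 * M)) ≤ c`: normalising can raise the density by no more
than one factor `(1 - 1 / (2 * M))⁻¹`. Where `ψ = 1` the perturbation multiplies the density by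
`(1 + 1 / M)⁻¹ ^ 2`, which is at most `(1 - 1 / (2 * M)) ^ 2` because the convex function
`(1 + t)⁻¹` lies below its chord on `[0, 1]`. One of these two factors `1 - 1 / (2 * M)` survives
the normalisation, and it is the separation. For a bump on an interval of length `2 * h` on which
`w = 1`, the mean of `ψ` is at most `2 * c * h`.
-/

theorem one_sub_two_mul_le_inv_one_add_sq {t : ℝ} (ht : -1 < t) :
    1 - 2 * t ≤ (1 + t)⁻¹ ^ 2 := by
  have hpos : 0 < 1 + t := by linarith
  rw [inv_pow, ← one_div, le_div_iff₀ (pow_pos hpos 2)]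
  calc (1 - 2 * t) * (1 + t) ^ 2 = 1 - t ^ 2 * (2 * (1 + t) + 1) := by ring
    _ ≤ 1 := sub_le_self 1 (by positivity)

theorem inv_one_add_le_one_sub_half {u : ℝ} (hu₀ : 0 ≤ u) (hu₁ : u ≤ 1) :
    (1 + u)⁻¹ ≤ 1 - u / 2 := by
  rw [inv_le_iff_one_le_mul₀ (by linarith)]
  have hchord : 0 ≤ u * (1 - u) := mul_nonneg hu₀ (sub_nonneg.mpr hu₁)
  linarith

section

variable {X : Type*} [MeasurableSpace X] {μ : Measure X}

theorem integral_sub_two_mul_integral_le_integral_inv_one_add_sq_mul {w t : X → ℝ}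
    (hw : 0 ≤ᵐ[μ] w) (ht : ∀ᵐ x ∂μ, -1 < t x) (hint : Integrable w μ)
    (hintt : Integrable (fun x => t x * w x) μ)
    (hintinv : Integrable (fun x => (1 + t x)⁻¹ ^ 2 * w x) μ) :
    ∫ x, w x ∂μ - 2 * ∫ x, t x * w x ∂μ ≤ ∫ x, (1 + t x)⁻¹ ^ 2 * w x ∂μ := by
  rw [← integral_const_mul, ← integral_sub hint (hintt.const_mul 2)]
  refine integral_mono_ae (hint.sub (hintt.const_mul 2)) hintinv ?_
  filter_upwards [hw, ht] with x hwx htx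
  calc w x - 2 * (t x * w x) = (1 - 2 * t x) * w x := by ring
    _ ≤ (1 + t x)⁻¹ ^ 2 * w x :=
      mul_le_mul_of_nonneg_right (one_sub_two_mul_le_inv_one_add_sq htx) hwx

theorem normalizer_mul_one_sub_two_mul_le {w t : X → ℝ} {c c' δ : ℝ}
    (hw : 0 ≤ᵐ[μ] w) (ht : ∀ᵐ x ∂μ, -1 < t x) (hc : 0 < c) (hc' : 0 < c')
    (hmass : ∫ x, w x ∂μ = 1 / c) (hmass' : ∫ x, (1 + t x)⁻¹ ^ 2 * w x ∂μ = 1 / c')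
    (hintt : Integrable (fun x => t x * w x) μ) (hmean : c * ∫ x, t x * w x ∂μ ≤ δ) :
    c' * (1 - 2 * δ) ≤ c := by
  have hint : Integrable w μ := .of_integral_ne_zero (by rw [hmass]; positivity)
  have hintinv : Integrable (fun x => (1 + t x)⁻¹ ^ 2 * w x) μ :=
    .of_integral_ne_zero (by rw [hmass']; positivity)
  have hle : 1 / c - 2 * ∫ x, t x * w x ∂μ ≤ 1 / c' := by
    rw [← hmass, ← hmass']
    exact integral_sub_two_mul_integral_le_integral_inv_one_add_sq_mul hw ht hint hintt hintinv
  calc c' * (1 - 2 * δ) ≤ c' * (1 - 2 * (c * ∫ x, t x * w x ∂μ)) := by gcongr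
    _ = c' * c * (1 / c - 2 * ∫ x, t x * w x ∂μ) := by field_simp
    _ ≤ c' * c * (1 / c') := by gcongr
    _ = c := by field_simp

theorem norm_integral_le_of_support_subset {E : Type*} [NormedAddCommGroup E] [NormedSpace ℝ E]
    {f : X → E} {s : Set X} {C : ℝ} (hs : μ s < ⊤) (hsupp : Function.support f ⊆ s)
    (hC : ∀ x ∈ s, ‖f x‖ ≤ C) : ‖∫ x, f x ∂μ‖ ≤ C * μ.real s := by
  rw [← setIntegral_eq_integral_of_forall_compl_eq_zero
    fun x hx => Function.notMem_support.mp fun hfx => hx (hsupp hfx)]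
  exact norm_setIntegral_le_of_norm_le_const hs hC

end

theorem div_one_add_sq_le_mul_one_sub_half {c c' u : ℝ} (hc' : 0 ≤ c') (hu₀ : 0 ≤ u) (hu₁ : u ≤ 1)
    (h : c' * (1 - u / 2) ≤ c) : c' / (1 + u) ^ 2 ≤ c * (1 - u / 2) := by
  have hhalf : 0 ≤ 1 - u / 2 := by linarith
  calc c' / (1 + u) ^ 2 = c' * (1 + u)⁻¹ ^ 2 := by rw [div_eq_mul_inv, inv_pow]
    _ ≤ c' * (1 - u / 2) ^ 2 := by gcongr; exact inv_one_add_le_one_sub_half hu₀ hu₁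
    _ = c' * (1 - u / 2) * (1 - u / 2) := by ring
    _ ≤ c * (1 - u / 2) := by gcongr

theorem intervalIntegral_eq_zero_of_eqOn_zero {E : Type*} [NormedAddCommGroup E] [NormedSpace ℝ E]
    {μ : Measure ℝ} {f : ℝ → E} {s : Set ℝ} [s.OrdConnected] {x y : ℝ} (hf : Set.EqOn f 0 s)
    (hx : x ∈ s) (hy : y ∈ s) : ∫ z in x..y, f z ∂μ = 0 :=
  (intervalIntegral.integral_congr
    (hf.mono (Set.OrdConnected.uIcc_subset ‹s.OrdConnected› hx hy))).trans
    intervalIntegral.integral_zero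

theorem exp_two_mul_eq_one_of_drift_eqOn_zero {b B : ℝ → ℝ} {s : Set ℝ} [s.OrdConnected] {x₀ x : ℝ}
    (hB : ∀ x, B x = ∫ y in x₀..x, b y) (hb : Set.EqOn b 0 s) (hx₀ : x₀ ∈ s) (hx : x ∈ s) :
    Real.exp (2 * B x) = 1 := by
  rw [hB, intervalIntegral_eq_zero_of_eqOn_zero hb hx₀ hx, mul_zero, Real.exp_zero]

theorem integral_mul_le_two_mul_of_support_subset_Icc {ψ w : ℝ → ℝ} {x₀ h : ℝ} (hh : 0 ≤ h)
    (hsupp : Function.support ψ ⊆ Set.Icc (x₀ - h) (x₀ + h))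
    (hψ : ∀ x ∈ Set.Icc (x₀ - h) (x₀ + h), |ψ x| ≤ 1)
    (hw : ∀ x ∈ Set.Icc (x₀ - h) (x₀ + h), w x = 1) : ∫ x, ψ x * w x ≤ 2 * h := by
  have hbound : ∀ x ∈ Set.Icc (x₀ - h) (x₀ + h), ‖ψ x * w x‖ ≤ 1 := fun x hx => by
    rw [hw x hx, mul_one]
    exact hψ x hx
  calc ∫ x, ψ x * w x ≤ ‖∫ x, ψ x * w x‖ := Real.le_norm_self _
    _ ≤ 1 * volume.real (Set.Icc (x₀ - h) (x₀ + h)) :=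
      norm_integral_le_of_support_subset measure_Icc_lt_top
        ((Function.support_mul_subset_left ψ w).trans hsupp) hbound
    _ = 2 * h := by rw [Real.volume_real_Icc_of_le (by linarith)]; ring

theorem stmt5_general {X : Type*} [MeasurableSpace X] (μ : Measure X) (w ψ : X → ℝ) (x₀ : X)
    (M : ℝ) (hM : 1 ≤ M) (hw : ∀ x, 0 ≤ w x) (hψ : ∀ x, -M < ψ x) (hψx : ψ x₀ = 1)
    (c : ℝ) (hc : 0 < c) (hc1 : ∫ x, w x ∂μ = 1 / c)
    (ctil : ℝ) (hctil : 0 < ctil) (hctil1 : 1 / ctil = ∫ x, (1 + ψ x / M)⁻¹ ^ 2 * w x ∂μ)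
    (hψw : Integrable (fun x => ψ x * w x) μ) (hmean : c * ∫ x, ψ x * w x ∂μ ≤ 1 / 4)
    (π πtil : X → ℝ) (hπ : π = fun x => c * w x)
    (hπtil : πtil = fun x => ctil * (1 + ψ x / M)⁻¹ ^ 2 * w x) :
    |πtil x₀ - π x₀| = |ctil / (1 + 1 / M) ^ 2 - c| * w x₀ ∧
      c / (2 * M) * w x₀ ≤ |πtil x₀ - π x₀| := by
  have hM₀ : 0 < M := by linarith
  have hscale : (fun x => ψ x / M * w x) = fun x => 1 / M * (ψ x * w x) := by ext; ring
  have hnorm : ctil * (1 - 2 * (1 / M * (1 / 4))) ≤ c := by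
    refine normalizer_mul_one_sub_two_mul_le (t := fun x => ψ x / M) (.of_forall hw)
      (.of_forall fun x => ?_) hc hctil hc1 hctil1.symm ?_ ?_
    · rw [lt_div_iff₀ hM₀, neg_one_mul]
      exact hψ x
    · rw [hscale]
      exact hψw.const_mul _
    · rw [hscale, integral_const_mul, mul_left_comm]
      gcongr
  have hsep : ctil / (1 + 1 / M) ^ 2 ≤ c * (1 - 1 / M / 2) :=
    div_one_add_sq_le_mul_one_sub_half hctil.le (by positivity) ((div_le_one hM₀).mpr hM)
      (by linarith)
  have hdiff : |πtil x₀ - π x₀| = |ctil / (1 + 1 / M) ^ 2 - c| * w x₀ := by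
    simp only [hπ, hπtil, hψx]
    rw [inv_pow, ← div_eq_mul_inv, ← sub_mul, abs_mul, abs_of_nonneg (hw x₀)]
  refine ⟨hdiff, hdiff ▸ mul_le_mul_of_nonneg_right ?_ (hw x₀)⟩
  calc c / (2 * M) = c - c * (1 - 1 / M / 2) := by field_simp; ring
    _ ≤ c - ctil / (1 + 1 / M) ^ 2 := sub_le_sub_left hsep c
    _ ≤ |ctil / (1 + 1 / M) ^ 2 - c| := abs_sub_comm c _ ▸ le_abs_self _

/-- In the perturbed stationary densities setup with `c·h ≤ 1/120`, the two stationary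
densities separate at the point `x*`: `|π̃(x*) − π(x*)| = |c̃/(1+1/M)² − c| ≥ c/(2M)`. -/
theorem stmt5
    (xstar A h M : ℝ) (hA : 1 ≤ A) (hh0 : 0 < h) (hh1 : h ≤ 1) (hM : 2 ≤ M)
    (b : ℝ → ℝ) (hbm : Measurable b)
    (hb0 : ∀ x ∈ Set.Icc (xstar - A) (xstar + A), b x = 0)
    (Bf : ℝ → ℝ) (hBf : ∀ x, Bf x = ∫ y in xstar..x, b y)
    (c : ℝ) (hc : 0 < c)
    (hint : Integrable (fun x => Real.exp (2 * Bf x)) volume)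
    (hc1 : ∫ x : ℝ, Real.exp (2 * Bf x) = 1 / c)
    (ψ : ℝ → ℝ) (hψm : Measurable ψ)
    (hψsupp : Function.support ψ ⊆ Set.Icc (xstar - h) (xstar + h))
    (hψ1 : ∀ x, |ψ x| ≤ 1) (hψx : ψ xstar = 1)
    (ctil : ℝ) (hctil : 0 < ctil)
    (hctil1 : 1 / ctil = ∫ x : ℝ, (1 + ψ x / M)⁻¹ ^ 2 * Real.exp (2 * Bf x))
    (π πtil : ℝ → ℝ)
    (hπ : π = fun x => c * Real.exp (2 * Bf x))
    (hπtil : πtil = fun x => ctil * (1 + ψ x / M)⁻¹ ^ 2 * Real.exp (2 * Bf x))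
    (hch : c * h ≤ 1 / 120) :
    |πtil xstar - π xstar| = |ctil / (1 + 1 / M) ^ 2 - c| ∧
      c / (2 * M) ≤ |πtil xstar - π xstar| := by
  have hflat : ∀ x ∈ Set.Icc (xstar - h) (xstar + h), Real.exp (2 * Bf x) = 1 := fun x hx =>
    exp_two_mul_eq_one_of_drift_eqOn_zero hBf hb0 ⟨by linarith, by linarith⟩
      ⟨by linarith [hx.1], by linarith [hx.2]⟩
  have hmean : c * ∫ x, ψ x * Real.exp (2 * Bf x) ≤ 1 / 4 :=
    (mul_le_mul_of_nonneg_left (integral_mul_le_two_mul_of_support_subset_Icc hh0.le hψsupp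
      (fun x _ => hψ1 x) hflat) hc.le).trans (by linarith)
  simpa only [hflat xstar ⟨by linarith, by linarith⟩, mul_one] using
    stmt5_general volume (fun x => Real.exp (2 * Bf x)) ψ xstar M (by linarith)
      (fun x => (Real.exp_pos _).le) (fun x => by linarith [(abs_le.mp (hψ1 x)).1]) hψx
      c hc hc1 ctil hctil hctil1 (hint.bdd_mul hψm.aestronglyMeasurable (.of_forall hψ1)) hmean
      π πtil hπ hπtil
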